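/- arXiv:1810.11316 — 6 statements merged into one kernel-verified Lean document; each statement's English description precedes it below -/
import Mathlib

section
/- Let m = p_1^{m_1} p_2^{m_2} ⋯ p_t^{m_t}, where t ≥ 2, m_1,…,m_t are positive integers and p_1 < p_2 < ⋯ < p_t are primes. Then for all k and i with 2 ≤ k ≤ t and 1 ≤ i ≤ k−1, we have φ(m/p_i) ≥ p_k^{m_k−1}·φ(m/p_k^{m_k}), and the inequality is strict except when k = 2, (p_1, p_2) = (2, 3) and m_1 ≥ 2. -/
/-!
Write `q = p_i`, `r = p_k` and `m = r ^ e * (q * n)` with `r` prime to `q * n`. Since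
`m / r ^ e = q * n` and `φ(m / q) = φ(r ^ e * n) = r ^ (e - 1) * (r - 1) * φ(n)`, the claim is that
`φ(q * n) ≤ (r - 1) * φ(n)`, and this holds because `φ(q * n) ≤ q * φ(n)` and `q ≤ r - 1`.
The first of these inequalities is strict unless `q ∣ n`, and the second unless `q` and `r` are
consecutive integers; two primes can only be so when they are `2` and `3`.
-/

section Totient

theorem totient_mul_le_mul_totient (a n : ℕ) : (a * n).totient ≤ a * n.totient := by
  induction a using Nat.recOnMul generalizing n with
  | zero => simp
  | one => simp
  | prime q hq =>
    by_cases hqn : q ∣ n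
    · exact (Nat.totient_mul_of_prime_of_dvd hq hqn).le
    · rw [Nat.totient_mul_of_prime_of_not_dvd hq hqn]
      exact Nat.mul_le_mul_right _ (q.sub_le 1)
  | mul a b iha ihb =>
    calc (a * b * n).totient = (a * (b * n)).totient := by rw [mul_assoc]
      _ ≤ a * (b * n).totient := iha _
      _ ≤ a * (b * n.totient) := Nat.mul_le_mul_left a (ihb n)
      _ = a * b * n.totient := (mul_assoc ..).symm

theorem totient_mul_lt_mul_totient_of_prime_of_not_dvd {q n : ℕ} (hq : q.Prime) (hqn : ¬q ∣ n) :
    (q * n).totient < q * n.totient := by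
  have hn : 0 < n := Nat.pos_of_ne_zero fun h => hqn (h ▸ dvd_zero q)
  rw [Nat.totient_mul_of_prime_of_not_dvd hq hqn]
  exact Nat.mul_lt_mul_of_pos_right (Nat.sub_lt hq.pos one_pos) (Nat.totient_pos.mpr hn)

theorem totient_mul_le_pred_mul_totient {q r : ℕ} (hqr : q < r) (n : ℕ) :
    (q * n).totient ≤ (r - 1) * n.totient :=
  (totient_mul_le_mul_totient q n).trans (Nat.mul_le_mul_right _ (Nat.le_sub_one_of_lt hqr))

theorem totient_mul_lt_pred_mul_totient {q r n : ℕ} (hq : q.Prime) (hqr : q < r) (hn : 0 < n)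
    (h : q ∣ n → q + 1 ≠ r) : (q * n).totient < (r - 1) * n.totient := by
  by_cases hqn : q ∣ n
  · have hq_lt : q < r - 1 := by have := h hqn; omega
    calc (q * n).totient ≤ q * n.totient := totient_mul_le_mul_totient q n
      _ < (r - 1) * n.totient := Nat.mul_lt_mul_of_pos_right hq_lt (Nat.totient_pos.mpr hn)
  · calc (q * n).totient < q * n.totient := totient_mul_lt_mul_totient_of_prime_of_not_dvd hq hqn
      _ ≤ (r - 1) * n.totient := Nat.mul_le_mul_right _ (Nat.le_sub_one_of_lt hqr)

variable {q r e n : ℕ}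

theorem totient_prime_pow_mul (hr : r.Prime) (he : 0 < e) (hrn : r.Coprime n) :
    (r ^ e * n).totient = r ^ (e - 1) * ((r - 1) * n.totient) := by
  rw [Nat.totient_mul (hrn.pow_left e), Nat.totient_prime_pow hr he, mul_assoc]

theorem pow_pred_mul_totient_mul_le (hr : r.Prime) (he : 0 < e) (hqr : q < r)
    (hrn : r.Coprime n) : r ^ (e - 1) * (q * n).totient ≤ (r ^ e * n).totient := by
  rw [totient_prime_pow_mul hr he hrn]
  exact Nat.mul_le_mul_left _ (totient_mul_le_pred_mul_totient hqr n)

theorem pow_pred_mul_totient_mul_lt (hq : q.Prime) (hr : r.Prime) (he : 0 < e) (hqr : q < r)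
    (hrn : r.Coprime n) (h : q ∣ n → q + 1 ≠ r) :
    r ^ (e - 1) * (q * n).totient < (r ^ e * n).totient := by
  have hn : 0 < n := Nat.pos_of_ne_zero fun h0 => hr.ne_one (by simpa [h0] using hrn)
  rw [totient_prime_pow_mul hr he hrn]
  exact Nat.mul_lt_mul_of_pos_left (totient_mul_lt_pred_mul_totient hq hqr hn h)
    (pow_pos hr.pos _)

end Totient

section PrimePowerProducts

variable {ι : Type*}

theorem exists_mem_eq_of_prime_dvd_prod_pow {s : Finset ι} {p f : ι → ℕ} {q : ℕ} (hq : q.Prime)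
    (hp : ∀ j ∈ s, (p j).Prime) (hdvd : q ∣ ∏ j ∈ s, p j ^ f j) :
    ∃ j ∈ s, p j = q ∧ f j ≠ 0 := by
  obtain ⟨j, hj, hqj⟩ := hq.prime.exists_mem_finset_dvd hdvd
  refine ⟨j, hj, ((Nat.prime_dvd_prime_iff_eq hq (hp j hj)).mp (hq.dvd_of_dvd_pow hqj)).symm, ?_⟩
  intro hfj
  exact hq.one_lt.ne' (by simpa [hfj] using hqj)

theorem mul_prod_pow_update_pred {M : Type*} [CommMonoid M] [DecidableEq ι] {s : Finset ι} {i : ι}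
    (p : ι → M) {f : ι → ℕ} (hi : i ∈ s) (hfi : 0 < f i) :
    p i * ∏ j ∈ s, p j ^ Function.update f i (f i - 1) j = ∏ j ∈ s, p j ^ f j := by
  have hrest : ∏ j ∈ s.erase i, p j ^ Function.update f i (f i - 1) j =
      ∏ j ∈ s.erase i, p j ^ f j :=
    Finset.prod_congr rfl fun j hj => by rw [Function.update_of_ne (Finset.ne_of_mem_erase hj)]
  rw [← Finset.mul_prod_erase s _ hi, ← Finset.mul_prod_erase s (fun j => p j ^ f j) hi, hrest,
    Function.update_self, ← mul_assoc, mul_pow_sub_one hfi.ne']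

theorem exists_prod_pow_eq_pow_mul_mul {s : Finset ι} {p e : ι → ℕ} {i k : ι}
    (hp : ∀ j ∈ s, (p j).Prime) (hinj : Set.InjOn p s) (hi : i ∈ s) (hk : k ∈ s) (hik : i ≠ k)
    (hei : 0 < e i) :
    ∃ n, ∏ j ∈ s, p j ^ e j = p k ^ e k * (p i * n) ∧ (p k).Coprime n ∧
      (p i ∣ n → 2 ≤ e i) := by
  classical
  have hp' : ∀ j ∈ s.erase k, (p j).Prime := fun j hj => hp j (Finset.mem_of_mem_erase hj)
  refine ⟨∏ j ∈ s.erase k, p j ^ Function.update e i (e i - 1) j, ?_, ?_, fun hdvd => ?_⟩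
  · rw [mul_prod_pow_update_pred p (Finset.mem_erase.mpr ⟨hik, hi⟩) hei,
      Finset.mul_prod_erase s (fun j => p j ^ e j) hk]
  · rw [(hp k hk).coprime_iff_not_dvd]
    intro hdvd
    obtain ⟨j, hj, hjk, -⟩ := exists_mem_eq_of_prime_dvd_prod_pow (hp k hk) hp' hdvd
    exact Finset.ne_of_mem_erase hj (hinj (Finset.mem_of_mem_erase hj) hk hjk)
  · obtain ⟨j, hj, hji, hej⟩ := exists_mem_eq_of_prime_dvd_prod_pow (hp i hi) hp' hdvd
    obtain rfl := hinj (Finset.mem_of_mem_erase hj) hi hji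
    rw [Function.update_self] at hej
    omega

end PrimePowerProducts

theorem eq_two_of_prime_of_prime_succ {q : ℕ} (hq : q.Prime) (hq' : (q + 1).Prime) : q = 2 := by
  by_contra hq2
  have hodd : Odd (q + 1) := hq'.odd_of_ne_two (by have := hq.two_le; omega)
  exact Nat.not_even_iff_odd.mpr hodd (hq.odd_of_ne_two hq2).add_one

theorem add_le_of_strictMonoOn_Iio {f : ℕ → ℕ} {t i : ℕ} (hf : StrictMonoOn f (Set.Iio t))
    (hi : i < t) : f 0 + i ≤ f i := by
  induction i with
  | zero => simp
  | succ i ih =>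
    have hstep : f i < f (i + 1) := hf ((Nat.lt_succ_self i).trans hi) hi (Nat.lt_succ_self i)
    have := ih ((Nat.lt_succ_self i).trans hi)
    omega

theorem eq_zero_and_eq_one_of_succ_eq {p : ℕ → ℕ} {t i k : ℕ} (hp : ∀ j < t, (p j).Prime)
    (hmono : StrictMonoOn p (Set.Iio t)) (hk : k < t) (hik : i < k) (hsucc : p i + 1 = p k) :
    i = 0 ∧ k = 1 ∧ p 0 = 2 ∧ p 1 = 3 := by
  have hi : i < t := hik.trans hk
  have hpi : p i = 2 := eq_two_of_prime_of_prime_succ (hp i hi) (hsucc ▸ hp k hk)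
  have hp0 : 2 ≤ p 0 := (hp 0 (Nat.zero_lt_of_lt hk)).two_le
  have hi0 : p 0 + i ≤ p i := add_le_of_strictMonoOn_Iio hmono hi
  have hk0 : p 0 + k ≤ p k := add_le_of_strictMonoOn_Iio hmono hk
  obtain rfl : i = 0 := by omega
  obtain rfl : k = 1 := by omega
  exact ⟨rfl, rfl, hpi, by omega⟩

/-- Lemma 2.4: `φ(m/p_i) ≥ p_k^(m_k-1)·φ(m/p_k^(m_k))` for `i < k`, strict except when
`k` is the second prime, `(p₁,p₂) = (2,3)` and `m₁ ≥ 2` (indices here are 0-based). -/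
theorem totient_div_ge_pow_mul_totient (m t : ℕ) (p e : ℕ → ℕ) (ht : 2 ≤ t)
    (hp : ∀ i, i < t → (p i).Prime)
    (hlt : ∀ i j, i < j → j < t → p i < p j)
    (he : ∀ i, i < t → 0 < e i)
    (hm : m = ∏ i ∈ Finset.range t, p i ^ e i) :
    ∀ k i, k < t → i < k →
      p k ^ (e k - 1) * Nat.totient (m / p k ^ e k) ≤ Nat.totient (m / p i) ∧
        (¬(k = 1 ∧ p 0 = 2 ∧ p 1 = 3 ∧ 2 ≤ e 0) →
          p k ^ (e k - 1) * Nat.totient (m / p k ^ e k) < Nat.totient (m / p i)) := by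
  intro k i hk hik
  have hi : i < t := hik.trans hk
  have hmono : StrictMonoOn p (Set.Iio t) := fun a _ b hb hab => hlt a b hab hb
  obtain ⟨n, hmn, hcop, hdvd⟩ := exists_prod_pow_eq_pow_mul_mul (e := e)
    (fun j hj => hp j (Finset.mem_range.mp hj)) (by simpa using hmono.injOn)
    (Finset.mem_range.mpr hi) (Finset.mem_range.mpr hk) hik.ne (he i hi)
  rw [← hm] at hmn
  have hdiv_k : m / p k ^ e k = p i * n := by
    rw [hmn, Nat.mul_div_cancel_left _ (pow_pos (hp k hk).pos _)]
  have hdiv_i : m / p i = p k ^ e k * n := by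
    rw [hmn, mul_left_comm, Nat.mul_div_cancel_left _ (hp i hi).pos]
  rw [hdiv_k, hdiv_i]
  refine ⟨pow_pred_mul_totient_mul_le (hp k hk) (he k hk) (hlt i k hik hk) hcop, fun hexc =>
    pow_pred_mul_totient_mul_lt (hp i hi) (hp k hk) (he k hk) (hlt i k hik hk) hcop ?_⟩
  intro hin hsucc
  obtain ⟨rfl, rfl, h2, h3⟩ := eq_zero_and_eq_one_of_succ_eq hp hmono hk hik hsucc
  exact hexc ⟨rfl, h2, h3, hdvd hin⟩
end

section
/- Let p_1 < p_2 < ⋯ < p_t be primes, t ≥ 1, and let {i_1, i_2, …, i_k} be any k-element subset of {1, 2, …, t}. Then p_{i_1} p_{i_2} ⋯ p_{i_k} − φ(p_{i_1} p_{i_2} ⋯ p_{i_k}) ≥ p_1 p_2 ⋯ p_k − φ(p_1 p_2 ⋯ p_k), with equality if and only if k = 1 or {i_1, i_2, …, i_k} = {1, 2, …, k}. -/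
/-!
The quantity `∏ a - ∏ (a - 1)`, which is `n - φ n` when the `a` are distinct primes with product
`n`, is affine in each factor `x`: it equals `(x - 1) * D + P`, where `D` and `P` are the same
quantity and the product taken over the other factors. If all factors are at least `1` then `D ≥ 0`,
so the quantity increases with every factor, strictly when `x` is not the only one. Exchanging the
primes of the initial segment that are missing from `s` for the remaining primes of `s`, along any
bijection, only enlarges factors.
-/

open Finset

section ProdCototient

variable {ι R : Type*} [CommRing R]

/-- The difference `∏ f - ∏ (f - 1)` over `s`. For a family of distinct primes it is the cototient
`n - φ n` of their product `n`; the formula makes sense in any commutative ring and separates the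
order-theoretic argument from the arithmetic of `φ`. -/
def prodCototient (f : ι → R) (s : Finset ι) : R :=
  ∏ i ∈ s, f i - ∏ i ∈ s, (f i - 1)

theorem prodCototient_of_card_eq_one {f : ι → R} {s : Finset ι} (hs : #s = 1) :
    prodCototient f s = 1 := by
  obtain ⟨i, rfl⟩ := card_eq_one.1 hs
  simp [prodCototient]

theorem prodCototient_insert [DecidableEq ι] {f : ι → R} {s : Finset ι} {x : ι} (hx : x ∉ s) :
    prodCototient f (insert x s) = (f x - 1) * prodCototient f s + ∏ i ∈ s, f i := by
  simp only [prodCototient, prod_insert hx]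
  ring

theorem prodCototient_univ_comp_equiv {κ : Type*} [Fintype κ] {s : Finset ι} (e : κ ≃ s)
    (f : ι → R) : prodCototient (fun i ↦ f (e i)) univ = prodCototient f s := by
  simp only [prodCototient, e.prod_comp (fun j : s ↦ f j), e.prod_comp (fun j : s ↦ f j - 1),
    prod_coe_sort s f, prod_coe_sort s (f · - 1)]

variable [PartialOrder R]

theorem prodCototient_nonneg [IsOrderedRing R] {f : ι → R} {s : Finset ι}
    (hf : ∀ i ∈ s, 1 ≤ f i) : 0 ≤ prodCototient f s :=
  sub_nonneg.2 <| prod_le_prod (fun i hi ↦ sub_nonneg.2 (hf i hi))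
    fun i _ ↦ sub_le_self (f i) zero_le_one

theorem prodCototient_pos [IsStrictOrderedRing R] {f : ι → R} {s : Finset ι} (hs : s.Nonempty)
    (hf : ∀ i ∈ s, 1 ≤ f i) : 0 < prodCototient f s := by
  classical
  obtain ⟨x, hx⟩ := hs
  have hf' : ∀ i ∈ s.erase x, 1 ≤ f i := fun i hi ↦ hf i (mem_of_mem_erase hi)
  rw [← insert_erase hx, prodCototient_insert (notMem_erase x s)]
  exact add_pos_of_nonneg_of_pos
    (mul_nonneg (sub_nonneg.2 (hf x hx)) (prodCototient_nonneg hf'))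
    (prod_pos fun i hi ↦ one_pos.trans_le (hf' i hi))

theorem prodCototient_le_prodCototient [IsOrderedRing R] {f g : ι → R} {s : Finset ι}
    (hf : ∀ i ∈ s, 1 ≤ f i) (hfg : ∀ i ∈ s, f i ≤ g i) :
    prodCototient f s ≤ prodCototient g s := by
  classical
  induction s using Finset.induction_on with
  | empty => simp [prodCototient]
  | insert x s hx ih =>
    rw [forall_mem_insert] at hf hfg
    rw [prodCototient_insert hx, prodCototient_insert hx]
    have hprod : ∏ i ∈ s, f i ≤ ∏ i ∈ s, g i :=
      prod_le_prod (fun i hi ↦ zero_le_one.trans (hf.2 i hi)) hfg.2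
    have hmul : (f x - 1) * prodCototient f s ≤ (g x - 1) * prodCototient g s :=
      mul_le_mul (sub_le_sub_right hfg.1 1) (ih hf.2 hfg.2) (prodCototient_nonneg hf.2)
        (sub_nonneg.2 (hf.1.trans hfg.1))
    exact add_le_add hmul hprod

theorem prodCototient_lt_prodCototient [IsStrictOrderedRing R] {f g : ι → R} {s : Finset ι}
    (hs : 1 < #s) (hf : ∀ i ∈ s, 1 ≤ f i) (hfg : ∀ i ∈ s, f i ≤ g i)
    (hlt : ∃ i ∈ s, f i < g i) : prodCototient f s < prodCototient g s := by
  classical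
  obtain ⟨x, hx, hfgx⟩ := hlt
  have hf' : ∀ i ∈ s.erase x, 1 ≤ f i := fun i hi ↦ hf i (mem_of_mem_erase hi)
  have hfg' : ∀ i ∈ s.erase x, f i ≤ g i := fun i hi ↦ hfg i (mem_of_mem_erase hi)
  have hne : (s.erase x).Nonempty := (one_lt_card_iff_nontrivial.1 hs).erase_nonempty
  have hprod : ∏ i ∈ s.erase x, f i ≤ ∏ i ∈ s.erase x, g i :=
    prod_le_prod (fun i hi ↦ zero_le_one.trans (hf' i hi)) hfg'
  rw [← insert_erase hx, prodCototient_insert (notMem_erase x s),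
    prodCototient_insert (notMem_erase x s)]
  refine add_lt_add_of_lt_of_le ?_ hprod
  calc (f x - 1) * prodCototient f (s.erase x)
    _ < (g x - 1) * prodCototient f (s.erase x) :=
      mul_lt_mul_of_pos_right (sub_lt_sub_right hfgx 1) (prodCototient_pos hne hf')
    _ ≤ (g x - 1) * prodCototient g (s.erase x) :=
      mul_le_mul_of_nonneg_left (prodCototient_le_prodCototient hf' hfg')
        (sub_nonneg.2 ((hf x hx).trans hfgx.le))

end ProdCototient

section Exchange

variable {ι R : Type*} [DecidableEq ι] {r s : Finset ι}

theorem exists_equiv_eq_or_mem_sdiff (hcard : #r = #s) :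
    ∃ e : r ≃ s, ∀ i : r, (e i : ι) = i ∨ (i : ι) ∈ r \ s ∧ (e i : ι) ∈ s \ r := by
  obtain ⟨e, he⟩ := exists_equiv_extend_of_card_eq (t := s) (s := {i : r | (i : ι) ∈ s})
    (f := Subtype.val) (by simpa using hcard) (by grind) Subtype.val_injective.injOn
  have hfix : ∀ i : r, (i : ι) ∈ s → (e i : ι) = i := fun i hi ↦ he i (by simpa using hi)
  refine ⟨e, fun i ↦ or_iff_not_imp_left.2 fun hne ↦ ?_⟩
  have hi : (i : ι) ∉ s := mt (hfix i) hne
  have hei : (e i : ι) ∉ r := fun hmem ↦ by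
    have hfixed : e ⟨e i, hmem⟩ = e i := Subtype.ext (hfix ⟨e i, hmem⟩ (e i).2)
    exact hne (congrArg Subtype.val (e.injective hfixed))
  exact ⟨mem_sdiff.2 ⟨i.2, hi⟩, mem_sdiff.2 ⟨(e i).2, hei⟩⟩

variable [CommRing R] [PartialOrder R] {f : ι → R}

theorem prodCototient_le_of_sdiff_le_sdiff [IsOrderedRing R] (hcard : #r = #s)
    (hf : ∀ i ∈ r, 1 ≤ f i) (hle : ∀ i ∈ r \ s, ∀ j ∈ s \ r, f i ≤ f j) :
    prodCototient f r ≤ prodCototient f s := by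
  obtain ⟨e, he⟩ := exists_equiv_eq_or_mem_sdiff hcard
  rw [← prodCototient_univ_comp_equiv e, ← prodCototient_univ_comp_equiv (.refl r)]
  refine prodCototient_le_prodCototient (fun i _ ↦ hf i i.2) fun i _ ↦ ?_
  rcases he i with hfix | ⟨hi, hei⟩
  · exact (congrArg f hfix).ge
  · exact hle i hi (e i) hei

theorem prodCototient_lt_of_sdiff_lt_sdiff [IsStrictOrderedRing R] (hcard : #r = #s)
    (hr : 1 < #r) (hne : r ≠ s) (hf : ∀ i ∈ r, 1 ≤ f i)
    (hlt : ∀ i ∈ r \ s, ∀ j ∈ s \ r, f i < f j) : prodCototient f r < prodCototient f s := by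
  obtain ⟨e, he⟩ := exists_equiv_eq_or_mem_sdiff hcard
  obtain ⟨x, hxr, hxs⟩ : ∃ x ∈ r, x ∉ s :=
    not_subset.1 fun hrs ↦ hne (eq_of_subset_of_card_le hrs hcard.ge)
  rw [← prodCototient_univ_comp_equiv e, ← prodCototient_univ_comp_equiv (.refl r)]
  refine prodCototient_lt_prodCototient (by simpa using hr) (fun i _ ↦ hf i i.2) (fun i _ ↦ ?_)
    ⟨⟨x, hxr⟩, mem_univ _, ?_⟩
  · rcases he i with hfix | ⟨hi, hei⟩
    · exact (congrArg f hfix).ge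
    · exact (hlt i hi (e i) hei).le
  · rcases he ⟨x, hxr⟩ with hfix | ⟨hx, hex⟩
    · exact absurd (by simpa only [hfix] using (e ⟨x, hxr⟩).2) hxs
    · exact hlt x hx _ hex

theorem prodCototient_eq_iff_of_sdiff_lt_sdiff [IsStrictOrderedRing R] (hcard : #r = #s)
    (hf : ∀ i ∈ r, 1 ≤ f i) (hlt : ∀ i ∈ r \ s, ∀ j ∈ s \ r, f i < f j) :
    prodCototient f s = prodCototient f r ↔ #s = 1 ∨ s = r := by
  constructor
  · intro heq
    by_contra! ⟨hs, hne⟩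
    have hs₀ : #s ≠ 0 := fun hs₀ ↦
      hne ((card_eq_zero.1 hs₀).trans (card_eq_zero.1 (hcard.trans hs₀)).symm)
    exact (prodCototient_lt_of_sdiff_lt_sdiff hcard (by lia) hne.symm hf hlt).ne' heq
  · rintro (hs | rfl)
    · rw [prodCototient_of_card_eq_one hs, prodCototient_of_card_eq_one (hcard.trans hs)]
    · rfl

end Exchange

section Totient

variable {ι : Type*} {p : ι → ℕ} {s : Finset ι}

theorem totient_prod_of_pairwise_coprime
    (hp : (s : Set ι).Pairwise (Function.onFun Nat.Coprime p)) :
    Nat.totient (∏ i ∈ s, p i) = ∏ i ∈ s, Nat.totient (p i) :=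
  ArithmeticFunction.IsMultiplicative.map_prod p
    (f := ⟨Nat.totient, Nat.totient_zero⟩) ⟨Nat.totient_one, Nat.totient_mul⟩ s hp

theorem prod_sub_totient_eq_prodCototient (hp : ∀ i ∈ s, (p i).Prime)
    (hinj : Set.InjOn p s) :
    (∏ i ∈ s, (p i : ℤ)) - (Nat.totient (∏ i ∈ s, p i) : ℤ) =
      prodCototient (fun i ↦ (p i : ℤ)) s := by
  have hcoprime : (s : Set ι).Pairwise (Function.onFun Nat.Coprime p) := fun i hi j hj hij ↦
    (Nat.coprime_primes (hp i hi) (hp j hj)).2 (hinj.ne hi hj hij)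
  rw [prodCototient, totient_prod_of_pairwise_coprime hcoprime, Nat.cast_prod]
  congr 1
  refine prod_congr rfl fun i hi ↦ ?_
  rw [Nat.totient_prime (hp i hi), Nat.cast_pred (hp i hi).pos]

theorem prod_sub_totient_ge_general {r : Finset ι} (hcard : #r = #s)
    (hpr : ∀ i ∈ r, (p i).Prime) (hps : ∀ i ∈ s, (p i).Prime)
    (hinjr : Set.InjOn p r) (hinjs : Set.InjOn p s)
    (hlt : ∀ i ∈ r, ∀ j ∈ s, i ∉ s → j ∉ r → p i < p j) :
    (∏ i ∈ r, (p i : ℤ)) - (Nat.totient (∏ i ∈ r, p i) : ℤ) ≤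
      (∏ i ∈ s, (p i : ℤ)) - (Nat.totient (∏ i ∈ s, p i) : ℤ) ∧
    ((∏ i ∈ s, (p i : ℤ)) - (Nat.totient (∏ i ∈ s, p i) : ℤ) =
        (∏ i ∈ r, (p i : ℤ)) - (Nat.totient (∏ i ∈ r, p i) : ℤ) ↔
      #s = 1 ∨ s = r) := by
  classical
  have hone : ∀ i ∈ r, 1 ≤ (p i : ℤ) := fun i hi ↦ by exact_mod_cast (hpr i hi).one_le
  have hsdiff : ∀ i ∈ r \ s, ∀ j ∈ s \ r, (p i : ℤ) < p j := fun i hi j hj ↦ by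
    rw [mem_sdiff] at hi hj
    exact_mod_cast hlt i hi.1 j hj.1 hi.2 hj.2
  rw [prod_sub_totient_eq_prodCototient hpr hinjr, prod_sub_totient_eq_prodCototient hps hinjs]
  exact ⟨prodCototient_le_of_sdiff_le_sdiff hcard hone fun i hi j hj ↦ (hsdiff i hi j hj).le,
    prodCototient_eq_iff_of_sdiff_lt_sdiff hcard hone hsdiff⟩

end Totient

/-- Lemma 2.7: for any `k`-element subset `s` of the first `t` (increasing) primes,
`∏_{i ∈ s} p_i − φ(∏_{i ∈ s} p_i) ≥ p₁⋯p_k − φ(p₁⋯p_k)`, with equality iff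
`k = 1` or `s` consists of the first `k` indices. -/
theorem prod_sub_totient_ge (t k : ℕ) (p : ℕ → ℕ) (ht : 1 ≤ t)
    (hp : ∀ i, i < t → (p i).Prime)
    (hlt : ∀ i j, i < j → j < t → p i < p j)
    (s : Finset ℕ) (hs : s ⊆ Finset.range t) (hcard : s.card = k) :
    ((∏ i ∈ Finset.range k, (p i : ℤ)) - (Nat.totient (∏ i ∈ Finset.range k, p i) : ℤ) ≤
      (∏ i ∈ s, (p i : ℤ)) - (Nat.totient (∏ i ∈ s, p i) : ℤ)) ∧
    ((∏ i ∈ s, (p i : ℤ)) - (Nat.totient (∏ i ∈ s, p i) : ℤ) =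
        (∏ i ∈ Finset.range k, (p i : ℤ)) - (Nat.totient (∏ i ∈ Finset.range k, p i) : ℤ) ↔
      (k = 1 ∨ s = Finset.range k)) := by
  subst hcard
  have hr : range #s ⊆ range t := range_subset_range.2 (by simpa using card_le_card hs)
  have hprime : ∀ i ∈ range t, (p i).Prime := fun i hi ↦ hp i (mem_range.1 hi)
  have hinj : Set.InjOn p (range t) :=
    StrictMonoOn.injOn fun i _ j hj hij ↦ hlt i j hij (mem_range.1 hj)
  exact prod_sub_totient_ge_general (card_range #s) (fun i hi ↦ hprime i (hr hi))
    (fun i hi ↦ hprime i (hs hi)) (hinj.mono hr) (hinj.mono hs) fun i hi j hj _ hjr ↦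
      hlt i j ((mem_range.1 hi).trans_le (by simpa using hjr)) (mem_range.1 (hs hj))
end

section
/- Let n = p_1^{n_1} p_2^{n_2} ⋯ p_r^{n_r}, where r ≥ 3, n_1,…,n_r are positive integers and p_1 < p_2 < ⋯ < p_r are primes. Then α_1(n) > α_2(n) > ⋯ > α_r(n), where for 1 ≤ j ≤ r, α_j(n) := φ(n) + (n/(p_1⋯p_r))·[(p_1⋯p_r)/p_j − φ((p_1⋯p_r)/p_j)]. -/
/-- `α_j(n) = φ(n) + (n/(p₁⋯p_r))·[(p₁⋯p_r)/p_j − φ((p₁⋯p_r)/p_j)]` (0-based index `j`). -/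
def alphaJ (n r : ℕ) (p e : ℕ → ℕ) (j : ℕ) : ℤ :=
  (Nat.totient n : ℤ) + (∏ i ∈ Finset.range r, (p i : ℤ) ^ (e i - 1)) *
    ((∏ i ∈ Finset.range r \ {j}, (p i : ℤ)) -
      (Nat.totient (∏ i ∈ Finset.range r \ {j}, p i) : ℤ))

/-!
Write `ψ(m) = m - φ(m)`. If `a` and `m` are coprime, then `ψ(a * m) = a * ψ(m) + ψ(a) * φ(m)`.
With `m` the product of all `p i` other than `p j` and `p k`, the bracket in `α_j` is
`ψ(p k * m)` and the one in `α_k` is `ψ(p j * m)`, so their difference is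
`(p k - p j) * ψ(m) + (ψ(p k) - ψ(p j)) * φ(m)`. The first term is positive because `r ≥ 3`
makes `m > 1`, and the second vanishes for primes, where `ψ` is `1`.
-/

/-- The cototient `m - φ(m)`, the number of residues modulo `m` that are not units. It takes
values in `ℤ` so that the subtraction is not truncated. -/
def cototient (m : ℕ) : ℤ :=
  m - Nat.totient m

theorem cototient_pos {m : ℕ} (hm : 1 < m) : 0 < cototient m :=
  sub_pos.2 (Nat.cast_lt.2 (Nat.totient_lt m hm))

theorem cototient_prime {p : ℕ} (hp : p.Prime) : cototient p = 1 := by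
  rw [cototient, Nat.totient_prime hp, Nat.cast_pred hp.pos, sub_sub_cancel]

theorem cototient_mul {a m : ℕ} (ham : a.Coprime m) :
    cototient (a * m) = a * cototient m + cototient a * Nat.totient m := by
  simp only [cototient, Nat.totient_mul ham, Nat.cast_mul]
  ring

theorem cototient_mul_lt_cototient_mul {a b m : ℕ} (ham : a.Coprime m) (hbm : b.Coprime m)
    (hm : 1 < m) (hab : a < b) (hcot : cototient a ≤ cototient b) :
    cototient (a * m) < cototient (b * m) := by
  rw [cototient_mul ham, cototient_mul hbm]
  exact add_lt_add_of_lt_of_le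
    (mul_lt_mul_of_pos_right (Nat.cast_lt.2 hab) (cototient_pos hm))
    (mul_le_mul_of_nonneg_right hcot (Nat.cast_nonneg _))

theorem cototient_prod_erase_lt_cototient_prod_erase {ι : Type*} [DecidableEq ι] {s : Finset ι}
    {p : ι → ℕ} {j k : ι} (hs : 2 < s.card) (hp : ∀ i ∈ s, 1 < p i)
    (hcop : (s : Set ι).Pairwise fun i l => (p i).Coprime (p l)) (hj : j ∈ s) (hk : k ∈ s)
    (hlt : p j < p k) (hcot : cototient (p j) ≤ cototient (p k)) :
    cototient (∏ i ∈ s.erase k, p i) < cototient (∏ i ∈ s.erase j, p i) := by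
  have hjk : j ≠ k := ne_of_apply_ne p hlt.ne
  have hj_mem : j ∈ s.erase k := Finset.mem_erase.2 ⟨hjk, hj⟩
  have hk_mem : k ∈ s.erase j := Finset.mem_erase.2 ⟨hjk.symm, hk⟩
  rw [← Finset.mul_prod_erase _ p hj_mem, ← Finset.mul_prod_erase _ p hk_mem,
    Finset.erase_right_comm]
  set t := (s.erase j).erase k with ht
  have mem_t {i : ι} (hi : i ∈ t) : i ≠ k ∧ i ≠ j ∧ i ∈ s := by
    simpa only [ht, Finset.mem_erase] using hi
  have ht_nonempty : t.Nonempty := by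
    rw [← Finset.card_pos, ht, Finset.card_erase_of_mem hk_mem, Finset.card_erase_of_mem hj]
    omega
  have hprod : 1 < ∏ i ∈ t, p i := by
    obtain ⟨l, hl⟩ := ht_nonempty
    calc 1 < p l := hp l (mem_t hl).2.2
      _ ≤ ∏ i ∈ t, p i :=
        Finset.single_le_prod' (fun i hi => (hp i (mem_t hi).2.2).le) hl
  have hj_cop : (p j).Coprime (∏ i ∈ t, p i) :=
    Nat.Coprime.prod_right fun i hi => hcop hj (mem_t hi).2.2 (mem_t hi).2.1.symm
  have hk_cop : (p k).Coprime (∏ i ∈ t, p i) :=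
    Nat.Coprime.prod_right fun i hi => hcop hk (mem_t hi).2.2 (mem_t hi).1.symm
  exact cototient_mul_lt_cototient_mul hj_cop hk_cop hprod hlt hcot

theorem alphaJ_eq_totient_add_mul_cototient (n r : ℕ) (p e : ℕ → ℕ) (j : ℕ) :
    alphaJ n r p e j = Nat.totient n + (∏ i ∈ Finset.range r, (p i : ℤ) ^ (e i - 1)) *
      cototient (∏ i ∈ (Finset.range r).erase j, p i) := by
  rw [alphaJ, cototient, Finset.sdiff_singleton_eq_erase, Nat.cast_prod]

theorem alphaJ_strict_anti_general (n r : ℕ) (p e : ℕ → ℕ) (hr : 3 ≤ r)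
    (hp : ∀ i, i < r → 1 < p i)
    (hcop : ∀ i j, i < j → j < r → (p i).Coprime (p j))
    (hlt : ∀ i j, i < j → j < r → p i < p j)
    (hcot : ∀ i j, i < j → j < r → cototient (p i) ≤ cototient (p j))
    (he : ∀ i, i < r → 0 < e i)
    (hn : n = ∏ i ∈ Finset.range r, p i ^ e i) :
    ∀ j k, j < k → k < r → alphaJ n r p e k < alphaJ n r p e j := by
  intro j k hjk hk
  have hcoeff : 0 < ∏ i ∈ Finset.range r, (p i : ℤ) ^ (e i - 1) :=
    Finset.prod_pos fun i hi =>
      pow_pos (Nat.cast_pos.2 (zero_lt_one.trans (hp i (Finset.mem_range.1 hi)))) _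
  have hcop_range : (Finset.range r : Set ℕ).Pairwise fun i l => (p i).Coprime (p l) := by
    intro i hi l hl hil
    rw [Finset.mem_coe, Finset.mem_range] at hi hl
    exact hil.lt_or_gt.elim (hcop i l · hl) fun hli => (hcop l i hli hi).symm
  have hcot_erase : cototient (∏ i ∈ (Finset.range r).erase k, p i) <
      cototient (∏ i ∈ (Finset.range r).erase j, p i) :=
    cototient_prod_erase_lt_cototient_prod_erase (by rwa [Finset.card_range])
      (fun i hi => hp i (Finset.mem_range.1 hi)) hcop_range (Finset.mem_range.2 (hjk.trans hk))
      (Finset.mem_range.2 hk) (hlt j k hjk hk) (hcot j k hjk hk)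
  simp only [alphaJ_eq_totient_add_mul_cototient]
  gcongr

/-- Lemma 3.2: `α₁(n) > α₂(n) > ⋯ > α_r(n)` for `r ≥ 3`. -/
theorem alphaJ_strict_anti (n r : ℕ) (p e : ℕ → ℕ) (hr : 3 ≤ r)
    (hp : ∀ i, i < r → (p i).Prime)
    (hlt : ∀ i j, i < j → j < r → p i < p j)
    (he : ∀ i, i < r → 0 < e i)
    (hn : n = ∏ i ∈ Finset.range r, p i ^ e i) :
    ∀ j k, j < k → k < r → alphaJ n r p e k < alphaJ n r p e j :=
  alphaJ_strict_anti_general n r p e hr (fun i hi => (hp i hi).one_lt)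
    (fun i j hij hj => (Nat.coprime_primes (hp i (hij.trans hj)) (hp j hj)).2 (hlt i j hij hj).ne)
    hlt (fun i j hij hj => by rw [cototient_prime (hp i (hij.trans hj)), cototient_prime (hp j hj)])
    he hn
end

section
/- Let n = p_1^{n_1} p_2^{n_2} ⋯ p_r^{n_r}, where r ≥ 3, n_1,…,n_r are positive integers and p_1 < p_2 < ⋯ < p_r are primes, and let j ∈ {1,…,r}. Define α_j(n) := φ(n) + (n/(p_1⋯p_r))·[(p_1⋯p_r)/p_j − φ((p_1⋯p_r)/p_j)] and β_j(n) := φ(n) + (n/(p_1⋯p_r))·(1/p_j^{n_j−1})·[(p_1⋯p_r)/p_j + φ((p_1⋯p_r)/p_j)·(p_j^{n_j−1} − 2)]. Then: (i) α_j(n) = β_j(n) if and only if n_j = 1; (ii) α_j(n) < β_j(n) if and only if n_j ≥ 2 and 2·φ((p_1⋯p_r)/p_j) > (p_1⋯p_r)/p_j; (iii) α_j(n) > β_j(n) if and only if n_j ≥ 2 and 2·φ((p_1⋯p_r)/p_j) < (p_1⋯p_r)/p_j. -/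
/-- `β_j(n) = φ(n) + (n/(p₁⋯p_r))·(1/p_j^(n_j-1))·[(p₁⋯p_r)/p_j +
φ((p₁⋯p_r)/p_j)·(p_j^(n_j-1) − 2)]` (0-based index `j`). -/
def betaJ (n r : ℕ) (p e : ℕ → ℕ) (j : ℕ) : ℤ :=
  (Nat.totient n : ℤ) + (∏ i ∈ Finset.range r \ {j}, (p i : ℤ) ^ (e i - 1)) *
    ((∏ i ∈ Finset.range r \ {j}, (p i : ℤ)) +
      (Nat.totient (∏ i ∈ Finset.range r \ {j}, p i) : ℤ) * ((p j : ℤ) ^ (e j - 1) - 2))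

/-!
The common term `φ(n)` cancels in the difference, and with `P = (p₁⋯p_r)/p_j` it factors as
`α_j(n) - β_j(n) = C · (p_j ^ (n_j - 1) - 1) · (P - 2 φ(P))`, where `C > 0`.
The middle factor vanishes exactly when `n_j = 1`. The last one vanishes only if `P` is a power
of two, which is impossible because `r ≥ 3` leaves at least two distinct primes in `P`.
-/

theorem two_mul_totient_eq_self_iff {m : ℕ} (hm : m ≠ 0) :
    2 * Nat.totient m = m ↔ ∃ k, m = 2 ^ (k + 1) := by
  constructor
  · intro h
    obtain ⟨a, b, hb, rfl⟩ := Nat.exists_eq_two_pow_mul_odd hm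
    cases a with
    | zero =>
      rw [pow_zero, one_mul] at h
      exact absurd ⟨_, h.symm.trans (two_mul _)⟩ (Nat.not_even_iff_odd.2 hb)
    | succ k =>
      have hcop : (2 ^ (k + 1)).Coprime b := (Nat.coprime_two_left.2 hb).pow_left _
      have htot : 2 ^ (k + 1) * Nat.totient b = 2 ^ (k + 1) * b := by
        rw [← h, Nat.totient_mul hcop, Nat.totient_prime_pow_succ Nat.prime_two]
        ring
      have hself : Nat.totient b = b := Nat.eq_of_mul_eq_mul_left (by positivity) htot
      have hb_le : b ≤ 1 := not_lt.1 fun hlt => (Nat.totient_lt b hlt).ne hself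
      exact ⟨k, by rw [le_antisymm hb_le hb.pos, mul_one]⟩
  · rintro ⟨k, rfl⟩
    rw [Nat.totient_prime_pow_succ Nat.prime_two]
    ring

theorem prod_primes_ne_prime_pow {ι : Type*} {s : Finset ι} {f : ι → ℕ} {q : ℕ}
    (hf : ∀ i ∈ s, (f i).Prime) (hinj : Set.InjOn f s) (hs : 1 < s.card) (hq : q.Prime) (k : ℕ) :
    ∏ i ∈ s, f i ≠ q ^ k := by
  intro h
  have heq : ∀ i ∈ s, f i = q := fun i hi =>
    Nat.prime_eq_prime_of_dvd_pow (hf i hi) hq (h ▸ Finset.dvd_prod_of_mem f hi)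
  obtain ⟨a, ha, b, hb, hab⟩ := Finset.one_lt_card.1 hs
  exact hab (hinj ha hb ((heq a ha).trans (heq b hb).symm))

theorem prod_primes_sdiff_singleton_ne_prime_pow {ι : Type*} [DecidableEq ι] {s : Finset ι}
    {f : ι → ℕ} {q : ℕ} (hf : ∀ i ∈ s, (f i).Prime) (hinj : Set.InjOn f s) (hs : 2 < s.card)
    (hq : q.Prime) (a : ι) (k : ℕ) :
    ∏ i ∈ s \ {a}, f i ≠ q ^ k := by
  have hsub : s \ {a} ⊆ s := Finset.sdiff_subset
  have hcard : 1 < (s \ {a}).card := by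
    have := Finset.le_card_sdiff {a} s
    rw [Finset.card_singleton] at this
    omega
  exact prod_primes_ne_prime_pow (fun i hi => hf i (hsub hi)) (hinj.mono hsub) hcard hq k

section Comparison

variable {n r : ℕ} {p e : ℕ → ℕ} {j : ℕ}

theorem alphaJ_sub_betaJ (hj : j < r) :
    alphaJ n r p e j - betaJ n r p e j =
      (∏ i ∈ Finset.range r \ {j}, (p i : ℤ) ^ (e i - 1)) * ((p j : ℤ) ^ (e j - 1) - 1) *
        ((∏ i ∈ Finset.range r \ {j}, p i : ℕ) -
          2 * (Nat.totient (∏ i ∈ Finset.range r \ {j}, p i) : ℤ)) := by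
  rw [alphaJ, betaJ, Finset.prod_eq_mul_prod_sdiff_singleton_of_mem (Finset.mem_range.2 hj)]
  push_cast
  ring

theorem alphaJ_eq_betaJ_of_exponent_eq_one (hj : j < r) (hej : e j = 1) :
    alphaJ n r p e j = betaJ n r p e j := by
  rw [← sub_eq_zero, alphaJ_sub_betaJ hj, hej, Nat.sub_self, pow_zero, sub_self, mul_zero, zero_mul]

theorem exists_pos_alphaJ_sub_betaJ_eq_mul (hp : ∀ i < r, 0 < p i) (hj : j < r) (hpj : 1 < p j)
    (hej : 2 ≤ e j) :
    ∃ c : ℤ, 0 < c ∧ alphaJ n r p e j - betaJ n r p e j =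
      c * ((∏ i ∈ Finset.range r \ {j}, p i : ℕ) -
        2 * (Nat.totient (∏ i ∈ Finset.range r \ {j}, p i) : ℤ)) := by
  refine ⟨_, mul_pos (Finset.prod_pos fun i hi => ?_) (sub_pos.2 ?_), alphaJ_sub_betaJ hj⟩
  · have hi_lt : i < r := Finset.mem_range.1 (Finset.mem_sdiff.1 hi).1
    exact pow_pos (by exact_mod_cast hp i hi_lt) _
  · exact one_lt_pow₀ (by exact_mod_cast hpj) (by omega)

theorem alphaJ_lt_betaJ_iff (hp : ∀ i < r, 0 < p i) (hj : j < r) (hpj : 1 < p j)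
    (hej : 2 ≤ e j) :
    alphaJ n r p e j < betaJ n r p e j ↔
      ∏ i ∈ Finset.range r \ {j}, p i <
        2 * Nat.totient (∏ i ∈ Finset.range r \ {j}, p i) := by
  obtain ⟨c, hc, hsub⟩ := exists_pos_alphaJ_sub_betaJ_eq_mul (n := n) hp hj hpj hej
  rw [← sub_neg, hsub, ← smul_eq_mul, smul_neg_iff_of_pos_left hc, sub_neg]
  exact_mod_cast Iff.rfl

theorem betaJ_lt_alphaJ_iff (hp : ∀ i < r, 0 < p i) (hj : j < r) (hpj : 1 < p j)
    (hej : 2 ≤ e j) :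
    betaJ n r p e j < alphaJ n r p e j ↔
      2 * Nat.totient (∏ i ∈ Finset.range r \ {j}, p i) <
        ∏ i ∈ Finset.range r \ {j}, p i := by
  obtain ⟨c, hc, hsub⟩ := exists_pos_alphaJ_sub_betaJ_eq_mul (n := n) hp hj hpj hej
  rw [← sub_pos, hsub, mul_pos_iff_of_pos_left hc, sub_pos]
  exact_mod_cast Iff.rfl

end Comparison

theorem alphaJ_betaJ_trichotomy_general (n r : ℕ) (p e : ℕ → ℕ)
    (hp : ∀ i < r, 0 < p i) (he : ∀ i < r, 0 < e i)
    (hn : n = ∏ i ∈ Finset.range r, p i ^ e i)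
    (j : ℕ) (hj : j < r) (hpj : 1 < p j)
    (hpow : ¬∃ k, ∏ i ∈ Finset.range r \ {j}, p i = 2 ^ (k + 1)) :
    (alphaJ n r p e j = betaJ n r p e j ↔ e j = 1) ∧
    (alphaJ n r p e j < betaJ n r p e j ↔
      2 ≤ e j ∧ ∏ i ∈ Finset.range r \ {j}, p i <
        2 * Nat.totient (∏ i ∈ Finset.range r \ {j}, p i)) ∧
    (betaJ n r p e j < alphaJ n r p e j ↔
      2 ≤ e j ∧ 2 * Nat.totient (∏ i ∈ Finset.range r \ {j}, p i) <
        ∏ i ∈ Finset.range r \ {j}, p i) := by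
  obtain hej | hej : e j = 1 ∨ 2 ≤ e j := by
    have := he j hj
    omega
  · have heq : alphaJ n r p e j = betaJ n r p e j :=
      alphaJ_eq_betaJ_of_exponent_eq_one hj hej
    have hnot : ¬2 ≤ e j := by omega
    exact ⟨iff_of_true heq hej, iff_of_false heq.not_lt fun h => hnot h.1,
      iff_of_false heq.not_gt fun h => hnot h.1⟩
  · have hlt := alphaJ_lt_betaJ_iff (n := n) hp hj hpj hej
    have hgt := betaJ_lt_alphaJ_iff (n := n) hp hj hpj hej
    have hprod : ∏ i ∈ Finset.range r \ {j}, p i ≠ 0 := Finset.prod_ne_zero_iff.2 fun i hi =>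
      (hp i (Finset.mem_range.1 (Finset.mem_sdiff.1 hi).1)).ne'
    have htot : 2 * Nat.totient (∏ i ∈ Finset.range r \ {j}, p i) ≠
        ∏ i ∈ Finset.range r \ {j}, p i :=
      mt (two_mul_totient_eq_self_iff hprod).1 hpow
    have hne : alphaJ n r p e j ≠ betaJ n r p e j :=
      htot.lt_or_gt.elim (fun h => (hgt.2 h).ne') (fun h => (hlt.2 h).ne)
    exact ⟨iff_of_false hne (by omega), hlt.trans (and_iff_right hej).symm,
      hgt.trans (and_iff_right hej).symm⟩

/-- Lemma 3.3: comparison of `α_j(n)` and `β_j(n)` for `r ≥ 3`. -/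
theorem alphaJ_betaJ_trichotomy (n r : ℕ) (p e : ℕ → ℕ) (hr : 3 ≤ r)
    (hp : ∀ i, i < r → (p i).Prime)
    (hlt : ∀ i j, i < j → j < r → p i < p j)
    (he : ∀ i, i < r → 0 < e i)
    (hn : n = ∏ i ∈ Finset.range r, p i ^ e i)
    (j : ℕ) (hj : j < r) :
    (alphaJ n r p e j = betaJ n r p e j ↔ e j = 1) ∧
    (alphaJ n r p e j < betaJ n r p e j ↔
      2 ≤ e j ∧ (∏ i ∈ Finset.range r \ {j}, p i) < 2 * Nat.totient (∏ i ∈ Finset.range r \ {j}, p i)) ∧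
    (betaJ n r p e j < alphaJ n r p e j ↔
      2 ≤ e j ∧ 2 * Nat.totient (∏ i ∈ Finset.range r \ {j}, p i) < (∏ i ∈ Finset.range r \ {j}, p i)) := by
  have hinj : Set.InjOn p (Finset.range r) :=
    StrictMonoOn.injOn fun a _ b hb hab => hlt a b hab (Finset.mem_range.1 hb)
  exact alphaJ_betaJ_trichotomy_general n r p e (fun i hi => (hp i hi).pos) he hn j hj
    (hp j hj).one_lt fun ⟨k, hk⟩ => prod_primes_sdiff_singleton_ne_prime_pow
      (fun i hi => hp i (Finset.mem_range.1 hi)) hinj (by rwa [Finset.card_range])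
      Nat.prime_two j (k + 1) hk
end

section
/- Let n = p_1^{n_1} p_2^{n_2} ⋯ p_r^{n_r}, where r ≥ 3, n_1,…,n_r are positive integers and p_1 < p_2 < ⋯ < p_r are primes. For distinct a, b ∈ {1,…,r}, define γ_{a,b}(n) := φ(n) + (n/(p_1⋯p_r))·[φ((p_1⋯p_r)/p_a) + φ((p_1⋯p_r)/p_b) + (p_1⋯p_r)/(p_a p_b) − φ((p_1⋯p_r)/(p_a p_b))]. Then for all distinct a, b ∈ {1,…,r} with {a, b} ≠ {r−1, r}, we have γ_{a,b}(n) > γ_{r−1,r}(n). -/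
/-- `γ_{a,b}(n) = φ(n) + (n/(p₁⋯p_r))·[φ((p₁⋯p_r)/p_a) + φ((p₁⋯p_r)/p_b) +
(p₁⋯p_r)/(p_a p_b) − φ((p₁⋯p_r)/(p_a p_b))]` (0-based indices). -/
def gammaAB (n r : ℕ) (p e : ℕ → ℕ) (a b : ℕ) : ℤ :=
  (Nat.totient n : ℤ) + (∏ i ∈ Finset.range r, (p i : ℤ) ^ (e i - 1)) *
    ((Nat.totient (∏ i ∈ Finset.range r \ {a}, p i) : ℤ) +
      (Nat.totient (∏ i ∈ Finset.range r \ {b}, p i) : ℤ) +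
      (∏ i ∈ Finset.range r \ ({a, b} : Finset ℕ), (p i : ℤ)) -
      (Nat.totient (∏ i ∈ Finset.range r \ ({a, b} : Finset ℕ), p i) : ℤ))

/-!
Write `P_T` for the product of the primes whose index is not in `T`. Since
`φ(P_{a}) = (p_b - 1) φ(P_{a,b})`, the bracket in `γ_{a,b}` equals
`(p_a + p_b - 3) φ(P_{a,b}) + P_{a,b}`. Comparing the pairs `{a, b}` and `{c, b}` over the common
`T = {a, b, c}`, the two brackets differ by `(p_c - p_a) (P_T + (p_b - 2) φ(P_T))`, which is
positive as soon as `p_a < p_c`. So `γ_{a,b}` strictly decreases when an index is raised, and the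
pair of the two largest indices gives the minimum.
-/

section Bracket

variable {ι : Type*} [DecidableEq ι] {p : ι → ℕ} {s t : Finset ι} {a b c : ι}

theorem prod_sdiff_eq_mul_prod_sdiff_insert {M : Type*} [CommMonoid M] (f : ι → M)
    (hb : b ∈ s \ t) : ∏ i ∈ s \ t, f i = f b * ∏ i ∈ s \ insert b t, f i := by
  rw [Finset.sdiff_insert, Finset.mul_prod_erase _ _ hb]

theorem totient_prod_sdiff_eq_mul (hp : ∀ i ∈ s, (p i).Prime) (hinj : Set.InjOn p s)
    (hb : b ∈ s \ t) :
    (Nat.totient (∏ i ∈ s \ t, p i) : ℤ) =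
      (p b - 1) * Nat.totient (∏ i ∈ s \ insert b t, p i) := by
  have hbs : b ∈ s := (Finset.mem_sdiff.1 hb).1
  have hcop : (p b).Coprime (∏ i ∈ s \ insert b t, p i) := by
    refine Nat.Coprime.prod_right fun i hi => ?_
    simp only [Finset.mem_sdiff, Finset.mem_insert, not_or] at hi
    obtain ⟨his, hib, -⟩ := hi
    exact (Nat.coprime_primes (hp b hbs) (hp i his)).2 (hinj.ne hbs his (Ne.symm hib))
  rw [prod_sdiff_eq_mul_prod_sdiff_insert p hb, Nat.totient_mul hcop,
    Nat.totient_prime (hp b hbs), Nat.cast_mul, Nat.cast_pred (hp b hbs).pos]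

/-- The expression in square brackets in the definition of `γ_{a,b}`, for a family `p` of primes
indexed by an arbitrary finite set `s`. -/
def gammaBracket (p : ι → ℕ) (s : Finset ι) (a b : ι) : ℤ :=
  Nat.totient (∏ i ∈ s \ {a}, p i) + Nat.totient (∏ i ∈ s \ {b}, p i) +
    ∏ i ∈ s \ {a, b}, (p i : ℤ) - Nat.totient (∏ i ∈ s \ {a, b}, p i)

theorem gammaBracket_comm (p : ι → ℕ) (s : Finset ι) (a b : ι) :
    gammaBracket p s a b = gammaBracket p s b a := by
  rw [gammaBracket, gammaBracket, Finset.pair_comm a b, add_comm (Nat.cast (Nat.totient _))]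

theorem gammaBracket_eq (hp : ∀ i ∈ s, (p i).Prime) (hinj : Set.InjOn p s)
    (ha : a ∈ s) (hb : b ∈ s) (hab : a ≠ b) :
    gammaBracket p s a b =
      (p a + p b - 3) * Nat.totient (∏ i ∈ s \ {a, b}, p i) + ∏ i ∈ s \ {a, b}, (p i : ℤ) := by
  have hφa : (Nat.totient (∏ i ∈ s \ {a}, p i) : ℤ) =
      (p b - 1) * Nat.totient (∏ i ∈ s \ {a, b}, p i) := by
    rw [totient_prod_sdiff_eq_mul hp hinj (b := b) (by simp [hb, hab.symm]), Finset.pair_comm]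
  have hφb : (Nat.totient (∏ i ∈ s \ {b}, p i) : ℤ) =
      (p a - 1) * Nat.totient (∏ i ∈ s \ {a, b}, p i) :=
    totient_prod_sdiff_eq_mul hp hinj (by simp [ha, hab])
  rw [gammaBracket, hφa, hφb]
  ring

theorem gammaBracket_sub_gammaBracket (hp : ∀ i ∈ s, (p i).Prime) (hinj : Set.InjOn p s)
    (ha : a ∈ s) (hb : b ∈ s) (hc : c ∈ s) (hab : a ≠ b) (hac : a ≠ c) (hbc : b ≠ c) :
    gammaBracket p s a b - gammaBracket p s c b =
      (p c - p a) * (∏ i ∈ s \ {a, b, c}, (p i : ℤ) +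
        (p b - 2) * Nat.totient (∏ i ∈ s \ {a, b, c}, p i)) := by
  have hc' : c ∈ s \ {a, b} := by simp [hc, hac.symm, hbc.symm]
  have ha' : a ∈ s \ {c, b} := by simp [ha, hac, hab]
  have hcab : ({c, a, b} : Finset ι) = {a, b, c} := by grind
  have hacb : ({a, c, b} : Finset ι) = {a, b, c} := by grind
  rw [gammaBracket_eq hp hinj ha hb hab, gammaBracket_eq hp hinj hc hb hbc.symm,
    totient_prod_sdiff_eq_mul hp hinj hc', totient_prod_sdiff_eq_mul hp hinj ha',
    prod_sdiff_eq_mul_prod_sdiff_insert _ hc', prod_sdiff_eq_mul_prod_sdiff_insert _ ha',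
    hcab, hacb]
  ring

theorem gammaBracket_lt_of_lt (hp : ∀ i ∈ s, (p i).Prime) (hinj : Set.InjOn p s)
    (ha : a ∈ s) (hb : b ∈ s) (hc : c ∈ s) (hab : a ≠ b) (hbc : b ≠ c) (hac : p a < p c) :
    gammaBracket p s c b < gammaBracket p s a b := by
  have hprod : 0 < ∏ i ∈ s \ {a, b, c}, (p i : ℤ) :=
    Finset.prod_pos fun i hi => mod_cast (hp i (Finset.mem_sdiff.1 hi).1).pos
  have hpac : 0 < (p c : ℤ) - p a := sub_pos.2 (mod_cast hac)
  have hpb : 0 ≤ (p b : ℤ) - 2 := sub_nonneg.2 (mod_cast (hp b hb).two_le)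
  rw [← sub_pos, gammaBracket_sub_gammaBracket hp hinj ha hb hc hab (ne_of_apply_ne p hac.ne) hbc]
  positivity

end Bracket

section Monotonicity

variable {ι : Type*} [LinearOrder ι] {p : ι → ℕ} {s : Finset ι}

theorem gammaBracket_strictAntiOn_left (hp : ∀ i ∈ s, (p i).Prime) (hmono : StrictMonoOn p s)
    {b : ι} (hb : b ∈ s) : StrictAntiOn (gammaBracket p s · b) (s \ {b}) :=
  fun _ ⟨ha, hab⟩ _ ⟨hc, hcb⟩ hac =>
    gammaBracket_lt_of_lt hp hmono.injOn ha hb hc hab (Ne.symm hcb) (hmono ha hc hac)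

theorem gammaBracket_lt_gammaBracket (hp : ∀ i ∈ s, (p i).Prime) (hmono : StrictMonoOn p s)
    {a b c d : ι} (ha : a ∈ s) (hb : b ∈ s) (hc : c ∈ s) (hd : d ∈ s) (hab : a < b) (hcd : c < d)
    (h : (a, b) < (c, d)) : gammaBracket p s c d < gammaBracket p s a b := by
  have had : a < d := hab.trans_le h.le.2
  have raise_first := gammaBracket_strictAntiOn_left hp hmono hd
  have raise_second := gammaBracket_strictAntiOn_left hp hmono ha
  have a_mem : a ∈ (s \ {d} : Set ι) := ⟨ha, had.ne⟩
  have c_mem : c ∈ (s \ {d} : Set ι) := ⟨hc, hcd.ne⟩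
  have b_mem : b ∈ (s \ {a} : Set ι) := ⟨hb, hab.ne'⟩
  have d_mem : d ∈ (s \ {a} : Set ι) := ⟨hd, had.ne'⟩
  rw [gammaBracket_comm p s a b]
  rcases Prod.mk_lt_mk.1 h with ⟨hac, hbd⟩ | ⟨hac, hbd⟩
  · calc gammaBracket p s c d < gammaBracket p s a d := raise_first a_mem c_mem hac
      _ = gammaBracket p s d a := gammaBracket_comm ..
      _ ≤ gammaBracket p s b a := raise_second.antitoneOn b_mem d_mem hbd
  · calc gammaBracket p s c d ≤ gammaBracket p s a d := raise_first.antitoneOn a_mem c_mem hac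
      _ = gammaBracket p s d a := gammaBracket_comm ..
      _ < gammaBracket p s b a := raise_second b_mem d_mem hbd

end Monotonicity

theorem gammaAB_eq_totient_add (n r : ℕ) (p e : ℕ → ℕ) (a b : ℕ) :
    gammaAB n r p e a b = Nat.totient n +
      (∏ i ∈ Finset.range r, (p i : ℤ) ^ (e i - 1)) * gammaBracket p (Finset.range r) a b :=
  rfl

theorem gammaAB_comm (n r : ℕ) (p e : ℕ → ℕ) (a b : ℕ) :
    gammaAB n r p e a b = gammaAB n r p e b a := by
  rw [gammaAB_eq_totient_add, gammaBracket_comm, ← gammaAB_eq_totient_add]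

theorem gammaAB_lt_gammaAB (n : ℕ) {r : ℕ} {p : ℕ → ℕ} (e : ℕ → ℕ)
    (hp : ∀ i ∈ Finset.range r, (p i).Prime) (hmono : StrictMonoOn p (Finset.range r))
    {a b c d : ℕ} (hab : a < b) (hcd : c < d) (hd : d < r) (h : (a, b) < (c, d)) :
    gammaAB n r p e c d < gammaAB n r p e a b := by
  have hpow : 0 < ∏ i ∈ Finset.range r, (p i : ℤ) ^ (e i - 1) :=
    Finset.prod_pos fun i hi => pow_pos (mod_cast (hp i hi).pos) _
  have hmem : ∀ {i}, i < r → i ∈ Finset.range r := Finset.mem_range.2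
  have hb : b < r := h.le.2.trans_lt hd
  have hbracket : gammaBracket p (Finset.range r) c d < gammaBracket p (Finset.range r) a b :=
    gammaBracket_lt_gammaBracket hp hmono (hmem (hab.trans hb)) (hmem hb) (hmem (hcd.trans hd))
      (hmem hd) hab hcd h
  simp only [gammaAB_eq_totient_add]
  gcongr

/-- Proposition 3.8: `γ_{a,b}(n) > γ_{r-1,r}(n)` whenever `{a,b} ≠ {r-1,r}`
(0-based: `{a,b} ≠ {r-2,r-1}`). -/
theorem gammaAB_gt (n r : ℕ) (p e : ℕ → ℕ) (hr : 3 ≤ r)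
    (hp : ∀ i, i < r → (p i).Prime)
    (hlt : ∀ i j, i < j → j < r → p i < p j)
    (he : ∀ i, i < r → 0 < e i)
    (hn : n = ∏ i ∈ Finset.range r, p i ^ e i)
    (a b : ℕ) (ha : a < r) (hb : b < r) (hab : a ≠ b)
    (hne : ({a, b} : Finset ℕ) ≠ {r - 2, r - 1}) :
    gammaAB n r p e (r - 2) (r - 1) < gammaAB n r p e a b := by
  wlog hlt_ab : a < b generalizing a b
  · rw [gammaAB_comm n r p e a b]
    exact this b a hb ha hab.symm (by rwa [Finset.pair_comm]) (by omega)
  have hmono : StrictMonoOn p (Finset.range r) := fun i _ j hj hij =>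
    hlt i j hij (Finset.mem_range.1 hj)
  have hpair : (a, b) < (r - 2, r - 1) := by
    have hle : a ≤ r - 2 ∧ b ≤ r - 1 := by omega
    refine lt_of_le_of_ne (Prod.mk_le_mk.2 hle) fun h => hne ?_
    rw [(Prod.mk.inj h).1, (Prod.mk.inj h).2]
  exact gammaAB_lt_gammaAB n e (fun i hi => hp i (Finset.mem_range.1 hi)) hmono hlt_ab
    (by omega) (by omega) hpair
end

section
/- Let n = p_1^{n_1} p_2^{n_2} ⋯ p_r^{n_r}, where r ≥ 3, n_1,…,n_r are positive integers and p_1 < p_2 < ⋯ < p_r are primes. Define α(n) := φ(n) + (n/(p_1⋯p_r))·[p_1⋯p_{r-1} − φ(p_1⋯p_{r-1})], β(n) := φ(n) + (n/(p_1⋯p_r))·(1/p_r^{n_r−1})·[p_1⋯p_{r-1} + φ(p_1⋯p_{r-1})·(p_r^{n_r−1} − 2)], and γ(n) := φ(n) + (n/(p_1⋯p_r))·[φ(p_1⋯p_{r-1}) + φ(p_1⋯p_{r-2}p_r) + p_1⋯p_{r-2} − φ(p_1⋯p_{r-2})]. Then: (i) if n_r ≥ 2, then β(n) < γ(n); (ii)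 α(n) ≤ γ(n) if and only if (2 + (p_r − 2)/(p_{r-1} − 1))·φ(p_1⋯p_{r-2}) ≥ p_1⋯p_{r-2} (equivalently, (2(p_{r-1} − 1) + p_r − 2)·φ(p_1⋯p_{r-2}) ≥ (p_{r-1} − 1)·p_1⋯p_{r-2}). -/
/-!
Write `n = p₁^{n₁} ⋯ p_r^{n_r}`, `M = p₁ ⋯ p_{r-2}`, `q = p_{r-1}`, `t = p_r` and
`T = t ^ (n_r - 1)`. After cancelling `φ(n)` and a positive common factor, only the bracketed terms
are compared. Since `q` and `t` do not divide `M`, these become polynomials in `M`, `φ(M)`, `q`,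
`t` and `T`: the bracket of `γ` is `M + (q + t - 3) φ(M)`, so `α ≤ γ` is a rearrangement of the
stated inequality, while `γ - β` is a positive multiple of
`M (T - q) + φ(M) (T (t - 2) + 2 (q - 1))`.
-/

open Finset

section Brackets

variable {M q t : ℕ}

theorem totient_mul_cast_of_prime_of_not_dvd (hq : q.Prime) (hqM : ¬ q ∣ M) :
    ((M * q).totient : ℤ) = (q - 1) * M.totient := by
  rw [mul_comm M q, Nat.totient_mul_of_prime_of_not_dvd hq hqM, Nat.cast_mul, Nat.cast_pred hq.pos]

theorem totient_mul_add_totient_mul_add_sub_totient (hq : q.Prime) (ht : t.Prime)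
    (hqM : ¬ q ∣ M) (htM : ¬ t ∣ M) :
    ((M * q).totient + (M * t).totient + M - M.totient : ℤ) = M + (q + t - 3) * M.totient := by
  rw [totient_mul_cast_of_prime_of_not_dvd hq hqM, totient_mul_cast_of_prime_of_not_dvd ht htM]
  ring

theorem mul_add_totient_mul_lt (hq : q.Prime) (ht : t.Prime) (hqM : ¬ q ∣ M) (htM : ¬ t ∣ M)
    {T : ℤ} (hqT : q ≤ T) :
    (M * q + (M * q).totient * (T - 2) : ℤ) <
      T * ((M * q).totient + (M * t).totient + M - M.totient) := by
  rw [totient_mul_add_totient_mul_add_sub_totient hq ht hqM htM,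
    totient_mul_cast_of_prime_of_not_dvd hq hqM]
  have hq_two : (2 : ℤ) ≤ q := mod_cast hq.two_le
  have ht_two : (2 : ℤ) ≤ t := mod_cast ht.two_le
  have hM : 0 < M := Nat.pos_of_ne_zero fun h ↦ hqM (h ▸ dvd_zero q)
  have htotient : (0 : ℤ) < M.totient := mod_cast Nat.totient_pos.2 hM
  have hfst : (0 : ℤ) ≤ M * (T - q) := mul_nonneg (Nat.cast_nonneg M) (sub_nonneg.2 hqT)
  have hfactor : (0 : ℤ) < T * (t - 2) + 2 * (q - 1) :=
    add_pos_of_nonneg_of_pos (mul_nonneg (by linarith) (by linarith)) (by linarith)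
  have hsnd : (0 : ℤ) < M.totient * (T * (t - 2) + 2 * (q - 1)) := mul_pos htotient hfactor
  linarith

theorem mul_sub_totient_mul_le_iff (hq : q.Prime) (ht : t.Prime) (hqM : ¬ q ∣ M)
    (htM : ¬ t ∣ M) :
    (M * q - (M * q).totient : ℤ) ≤ (M * q).totient + (M * t).totient + M - M.totient ↔
      ((q - 1) * M : ℤ) ≤ (2 * (q - 1) + t - 2) * M.totient := by
  rw [totient_mul_add_totient_mul_add_sub_totient hq ht hqM htM,
    totient_mul_cast_of_prime_of_not_dvd hq hqM]
  constructor <;> intro h <;> linarith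

end Brackets

/-- The paper's `α(n)` for `n = ∏ i < r, p i ^ (k i + 1)`. The primes are indexed from `0`, and the
exponents are written as `k i + 1` so that `n / (p₁ ⋯ p_r)` is `∏ i < r, p i ^ k i`. -/
def totientAlpha (r : ℕ) (p k : ℕ → ℕ) : ℤ :=
  (∏ i ∈ range r, p i ^ (k i + 1)).totient +
    (∏ i ∈ range r, (p i : ℤ) ^ k i) *
      ((∏ i ∈ range (r - 1), (p i : ℤ)) - (∏ i ∈ range (r - 1), p i).totient)

/-- The paper's `β(n)` for `n = ∏ i < r, p i ^ (k i + 1)`, with the factor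
`n / (p₁ ⋯ p_r) · 1 / p_r^{n_r - 1}` written as the product of the first `r - 1` powers. -/
def totientBeta (r : ℕ) (p k : ℕ → ℕ) : ℤ :=
  (∏ i ∈ range r, p i ^ (k i + 1)).totient +
    (∏ i ∈ range (r - 1), (p i : ℤ) ^ k i) *
      ((∏ i ∈ range (r - 1), (p i : ℤ)) +
        (∏ i ∈ range (r - 1), p i).totient * ((p (r - 1) : ℤ) ^ k (r - 1) - 2))

/-- The paper's `γ(n)` for `n = ∏ i < r, p i ^ (k i + 1)`; it is meant for `2 ≤ r`, where
the subtractions `r - 1` and `r - 2` do not truncate. -/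
def totientGamma (r : ℕ) (p k : ℕ → ℕ) : ℤ :=
  (∏ i ∈ range r, p i ^ (k i + 1)).totient +
    (∏ i ∈ range r, (p i : ℤ) ^ k i) *
      ((∏ i ∈ range (r - 1), p i).totient + ((∏ i ∈ range (r - 2), p i) * p (r - 1)).totient +
        (∏ i ∈ range (r - 2), (p i : ℤ)) - (∏ i ∈ range (r - 2), p i).totient)

section Comparison

variable {r : ℕ} {p : ℕ → ℕ}

theorem not_dvd_prod_range_of_injOn (hp : ∀ i, i < r → (p i).Prime)
    (hinj : Set.InjOn p (Set.Iio r)) {s j : ℕ} (hsj : s ≤ j) (hjr : j < r) :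
    ¬ p j ∣ ∏ i ∈ range s, p i := by
  refine (hp j hjr).prime.not_dvd_finsetProd fun i hi hdvd ↦ ?_
  have hij : i < j := (mem_range.1 hi).trans_le hsj
  have hir : i < r := hij.trans hjr
  exact hij.ne' (hinj hjr hir ((Nat.prime_dvd_prime_iff_eq (hp j hjr) (hp i hir)).1 hdvd))

theorem prod_range_cast_pow_pos (hp : ∀ i, i < r → 0 < p i) (k : ℕ → ℕ) :
    0 < ∏ i ∈ range r, (p i : ℤ) ^ k i :=
  prod_pos fun i hi ↦ pow_pos (mod_cast hp i (mem_range.1 hi)) _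

theorem prod_range_pow_sub_one_add_one {e : ℕ → ℕ} (he : ∀ i, i < r → 0 < e i) :
    ∏ i ∈ range r, p i ^ (e i - 1 + 1) = ∏ i ∈ range r, p i ^ e i :=
  prod_congr rfl fun i hi ↦ by rw [Nat.sub_add_cancel (he i (mem_range.1 hi))]

theorem totientBeta_lt_totientGamma (hr : 2 ≤ r) (hp : ∀ i, i < r → (p i).Prime)
    (hinj : Set.InjOn p (Set.Iio r)) {k : ℕ → ℕ} (hle : p (r - 2) ≤ p (r - 1) ^ k (r - 1)) :
    totientBeta r p k < totientGamma r p k := by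
  obtain ⟨s, rfl⟩ := Nat.exists_eq_add_of_le' hr
  have hbracket := mul_add_totient_mul_lt (hp s (by lia)) (hp (s + 1) (by lia))
    (not_dvd_prod_range_of_injOn hp hinj le_rfl (by lia))
    (not_dvd_prod_range_of_injOn hp hinj s.le_succ (by lia))
    (T := (p (s + 1) : ℤ) ^ k (s + 1)) (mod_cast hle)
  have hscaled := mul_lt_mul_of_pos_left hbracket
    (prod_range_cast_pow_pos (fun i (hi : i < s + 1) ↦ (hp i (by lia)).pos) k)
  simpa only [totientBeta, totientGamma, Nat.add_succ_sub_one, Nat.add_sub_cancel,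
    add_lt_add_iff_left, prod_range_succ _ s, prod_range_succ _ (s + 1), Nat.cast_prod, mul_assoc]
    using hscaled

theorem totientAlpha_le_totientGamma_iff (hr : 2 ≤ r) (hp : ∀ i, i < r → (p i).Prime)
    (hinj : Set.InjOn p (Set.Iio r)) (k : ℕ → ℕ) :
    totientAlpha r p k ≤ totientGamma r p k ↔
      ((p (r - 2) : ℤ) - 1) * ∏ i ∈ range (r - 2), (p i : ℤ) ≤
        (2 * ((p (r - 2) : ℤ) - 1) + p (r - 1) - 2) * (∏ i ∈ range (r - 2), p i).totient := by
  rw [totientAlpha, totientGamma, add_le_add_iff_left,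
    mul_le_mul_iff_right₀ (prod_range_cast_pow_pos (fun i hi ↦ (hp i hi).pos) k)]
  obtain ⟨s, rfl⟩ := Nat.exists_eq_add_of_le' hr
  have hbracket := mul_sub_totient_mul_le_iff (hp s (by lia)) (hp (s + 1) (by lia))
    (not_dvd_prod_range_of_injOn hp hinj le_rfl (by lia))
    (not_dvd_prod_range_of_injOn hp hinj s.le_succ (by lia))
  simpa only [Nat.add_succ_sub_one, Nat.add_sub_cancel, prod_range_succ, Nat.cast_prod]
    using hbracket

end Comparison

theorem beta_lt_gamma_and_alpha_le_gamma_iff_general (r : ℕ) (p k : ℕ → ℕ) (hr : 2 ≤ r)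
    (hp : ∀ i, i < r → (p i).Prime) (hinj : Set.InjOn p (Set.Iio r)) :
    (p (r - 2) ≤ p (r - 1) ^ k (r - 1) → totientBeta r p k < totientGamma r p k) ∧
      (totientAlpha r p k ≤ totientGamma r p k ↔
        ((p (r - 2) : ℤ) - 1) * ∏ i ∈ range (r - 2), (p i : ℤ) ≤
          (2 * ((p (r - 2) : ℤ) - 1) + p (r - 1) - 2) * (∏ i ∈ range (r - 2), p i).totient) :=
  ⟨totientBeta_lt_totientGamma hr hp hinj, totientAlpha_le_totientGamma_iff hr hp hinj k⟩

/-- Proposition 3.9: (i) if `n_r ≥ 2` then `β(n) < γ(n)`;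
(ii) `α(n) ≤ γ(n)` iff `(2(p_{r-1} − 1) + p_r − 2)·φ(p₁⋯p_{r-2}) ≥ (p_{r-1} − 1)·p₁⋯p_{r-2}`. -/
theorem beta_lt_gamma_and_alpha_le_gamma_iff (n r : ℕ) (p e : ℕ → ℕ) (hr : 3 ≤ r)
    (hp : ∀ i, i < r → (p i).Prime)
    (hlt : ∀ i j, i < j → j < r → p i < p j)
    (he : ∀ i, i < r → 0 < e i)
    (hn : n = ∏ i ∈ Finset.range r, p i ^ e i) :
    (2 ≤ e (r - 1) →
      ((Nat.totient n : ℤ) +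
      (∏ i ∈ Finset.range (r - 1), (p i : ℤ) ^ (e i - 1)) *
        ((∏ i ∈ Finset.range (r - 1), (p i : ℤ)) + (Nat.totient (∏ i ∈ Finset.range (r - 1), p i) : ℤ) * ((p (r - 1) : ℤ) ^ (e (r - 1) - 1) - 2))) <
      ((Nat.totient n : ℤ) +
      (∏ i ∈ Finset.range r, (p i : ℤ) ^ (e i - 1)) *
        ((Nat.totient (∏ i ∈ Finset.range (r - 1), p i) : ℤ) + (Nat.totient ((∏ i ∈ Finset.range (r - 2), p i) * p (r - 1)) : ℤ) + (∏ i ∈ Finset.range (r - 2), (p i : ℤ)) - (Nat.totient (∏ i ∈ Finset.range (r - 2), p i) : ℤ)))) ∧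
    (((Nat.totient n : ℤ) +
      (∏ i ∈ Finset.range r, (p i : ℤ) ^ (e i - 1)) *
        ((∏ i ∈ Finset.range (r - 1), (p i : ℤ)) - (Nat.totient (∏ i ∈ Finset.range (r - 1), p i) : ℤ))) ≤
      ((Nat.totient n : ℤ) +
      (∏ i ∈ Finset.range r, (p i : ℤ) ^ (e i - 1)) *
        ((Nat.totient (∏ i ∈ Finset.range (r - 1), p i) : ℤ) + (Nat.totient ((∏ i ∈ Finset.range (r - 2), p i) * p (r - 1)) : ℤ) + (∏ i ∈ Finset.range (r - 2), (p i : ℤ)) - (Nat.totient (∏ i ∈ Finset.range (r - 2), p i) : ℤ))) ↔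
      ((p (r - 2) : ℤ) - 1) * (∏ i ∈ Finset.range (r - 2), (p i : ℤ)) ≤
        (2 * ((p (r - 2) : ℤ) - 1) + (p (r - 1) : ℤ) - 2) *
          (Nat.totient (∏ i ∈ Finset.range (r - 2), p i) : ℤ)) := by
  obtain rfl := hn.trans (prod_range_pow_sub_one_add_one he).symm
  have hgeneral := beta_lt_gamma_and_alpha_le_gamma_iff_general r p (fun i ↦ e i - 1) (by lia) hp
    (StrictMonoOn.injOn fun i _ j hj hij ↦ hlt i j hij hj)
  exact ⟨fun hlast ↦ hgeneral.1 <|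
    (hlt _ _ (by lia) (by lia)).le.trans (Nat.le_self_pow (by lia) _), hgeneral.2⟩
end
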